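/- Every four-dimensional non-split complex Zinbiel algebra A with dim A² = 2, dim A³ = 1, and dim A⁴ = 0 is isomorphic to one of the following algebras (given by the nonzero products on a basis e_1, e_2, e_3, e_4): A_2: e_1∘e_1=e_3, e_1∘e_2=e_4, e_1∘e_3=e_4, e_3∘e_1=2e_4; A_3: e_1∘e_1=e_3, e_1∘e_3=e_4, e_2∘e_2=e_4, e_3∘e_1=2e_4; A_4: e_1∘e_2=e_3, e_1∘e_3=e_4, e_2∘e_1=−e_3; A_5: e_1∘e_2=e_3, e_1∘e_3=e_4, e_2∘e_1=−e_3, e_2∘e_2=e_4. -/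

import Mathlib

/-- A bilinear multiplication `mul` is a *Zinbiel* multiplication if it satisfies
`(x∘y)∘z = x∘(y∘z) + x∘(z∘y)`. -/
def IsZinbiel {K A : Type*} [CommRing K] [AddCommGroup A] [Module K A]
    (mul : A →ₗ[K] A →ₗ[K] A) : Prop :=
  ∀ x y z : A, mul (mul x y) z = mul x (mul y z) + mul x (mul z y)

/-- The descending series of a (Zinbiel) algebra: `zpow mul i` is `A^i`,
with `A^1 = A` and `A^{k+1} = A ∘ A^k` (we also set `A^0 = A` for convenience). -/
def zpow {K A : Type*} [CommRing K] [AddCommGroup A] [Module K A]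
    (mul : A →ₗ[K] A →ₗ[K] A) : ℕ → Submodule K A
  | 0 => ⊤
  | 1 => ⊤
  | (k+2) => Submodule.span K {z | ∃ a : A, ∃ b ∈ zpow mul (k+1), z = mul a b}

/-- The bilinear multiplication on `Fin n → ℂ` determined by structure constants `c`:
`e_i ∘ e_j = ∑ k, c i j k • e_k`. -/
noncomputable def mulOf (n : ℕ) (c : Fin n → Fin n → Fin n → ℂ) :
    (Fin n → ℂ) →ₗ[ℂ] (Fin n → ℂ) →ₗ[ℂ] (Fin n → ℂ) :=
  LinearMap.mk₂ ℂ (fun x y k => ∑ i, ∑ j, x i * y j * c i j k)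
    (fun x x' y => by
      funext k
      simp [add_mul, Finset.sum_add_distrib])
    (fun a x y => by
      funext k
      simp [Finset.mul_sum, mul_assoc])
    (fun x y y' => by
      funext k
      simp [mul_add, add_mul, Finset.sum_add_distrib])
    (fun a x y => by
      funext k
      simp [Finset.mul_sum, mul_assoc, mul_left_comm])

/-- Two bilinear multiplications give isomorphic algebras if there is a linear
equivalence intertwining them. -/
def Isom {A B : Type*} [AddCommGroup A] [Module ℂ A] [AddCommGroup B] [Module ℂ B]
    (mulA : A →ₗ[ℂ] A →ₗ[ℂ] A) (mulB : B →ₗ[ℂ] B →ₗ[ℂ] B) : Prop :=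
  ∃ f : A ≃ₗ[ℂ] B, ∀ x y : A, f (mulA x y) = mulB (f x) (f y)

/-- Structure constants of the nul-filiform algebra `NF_n`:
`e_i ∘ e_j = C(i+j-1, j) e_{i+j}` for `2 ≤ i+j ≤ n` (1-indexed). -/
noncomputable def NFc (n : ℕ) : Fin n → Fin n → Fin n → ℂ := fun i j k =>
  if (i : ℕ) + j + 1 = (k : ℕ) then (((i : ℕ) + j + 1).choose ((j : ℕ) + 1) : ℂ) else 0

/-- The nul-filiform Zinbiel algebra `NF_n` (as a multiplication on `Fin n → ℂ`). -/
noncomputable def NFmul (n : ℕ) : (Fin n → ℂ) →ₗ[ℂ] (Fin n → ℂ) →ₗ[ℂ] (Fin n → ℂ) :=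
  mulOf n (NFc n)

/-- The sixteen families of 4-dimensional complex Zinbiel algebras from the classification
theorem, given by structure constants on a basis `e_1, e_2, e_3, e_4`;
`dim4Table k α` corresponds to `A_{k+1}` (the parameter `α` is used only by
`A_8`, `A_9` and `A_15`). -/
noncomputable def dim4Table : Fin 16 → ℂ → (Fin 4 → Fin 4 → Fin 4 → ℂ) := fun idx α =>
  ![ -- A_1 : e1e1=e2, e1e2=e3, e2e1=2e3, e1e3=e4, e2e2=3e4, e3e1=3e4
    ![![![0,1,0,0], ![0,0,1,0], ![0,0,0,1], ![0,0,0,0]],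
      ![![0,0,2,0], ![0,0,0,3], ![0,0,0,0], ![0,0,0,0]],
      ![![0,0,0,3], ![0,0,0,0], ![0,0,0,0], ![0,0,0,0]],
      ![![0,0,0,0], ![0,0,0,0], ![0,0,0,0], ![0,0,0,0]]],
    -- A_2 : e1e1=e3, e1e2=e4, e1e3=e4, e3e1=2e4
    ![![![0,0,1,0], ![0,0,0,1], ![0,0,0,1], ![0,0,0,0]],
      ![![0,0,0,0], ![0,0,0,0], ![0,0,0,0], ![0,0,0,0]],
      ![![0,0,0,2], ![0,0,0,0], ![0,0,0,0], ![0,0,0,0]],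
      ![![0,0,0,0], ![0,0,0,0], ![0,0,0,0], ![0,0,0,0]]],
    -- A_3 : e1e1=e3, e1e3=e4, e2e2=e4, e3e1=2e4
    ![![![0,0,1,0], ![0,0,0,0], ![0,0,0,1], ![0,0,0,0]],
      ![![0,0,0,0], ![0,0,0,1], ![0,0,0,0], ![0,0,0,0]],
      ![![0,0,0,2], ![0,0,0,0], ![0,0,0,0], ![0,0,0,0]],
      ![![0,0,0,0], ![0,0,0,0], ![0,0,0,0], ![0,0,0,0]]],
    -- A_4 : e1e2=e3, e1e3=e4, e2e1=-e3
    ![![![0,0,0,0], ![0,0,1,0], ![0,0,0,1], ![0,0,0,0]],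
      ![![0,0,-1,0], ![0,0,0,0], ![0,0,0,0], ![0,0,0,0]],
      ![![0,0,0,0], ![0,0,0,0], ![0,0,0,0], ![0,0,0,0]],
      ![![0,0,0,0], ![0,0,0,0], ![0,0,0,0], ![0,0,0,0]]],
    -- A_5 : e1e2=e3, e1e3=e4, e2e1=-e3, e2e2=e4
    ![![![0,0,0,0], ![0,0,1,0], ![0,0,0,1], ![0,0,0,0]],
      ![![0,0,-1,0], ![0,0,0,1], ![0,0,0,0], ![0,0,0,0]],
      ![![0,0,0,0], ![0,0,0,0], ![0,0,0,0], ![0,0,0,0]],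
      ![![0,0,0,0], ![0,0,0,0], ![0,0,0,0], ![0,0,0,0]]],
    -- A_6 : e1e1=e4, e1e2=e3, e2e1=-e3, e2e2=-2e3+e4
    ![![![0,0,0,1], ![0,0,1,0], ![0,0,0,0], ![0,0,0,0]],
      ![![0,0,-1,0], ![0,0,-2,1], ![0,0,0,0], ![0,0,0,0]],
      ![![0,0,0,0], ![0,0,0,0], ![0,0,0,0], ![0,0,0,0]],
      ![![0,0,0,0], ![0,0,0,0], ![0,0,0,0], ![0,0,0,0]]],
    -- A_7 : e1e2=e3, e2e1=e4, e2e2=-e3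
    ![![![0,0,0,0], ![0,0,1,0], ![0,0,0,0], ![0,0,0,0]],
      ![![0,0,0,1], ![0,0,-1,0], ![0,0,0,0], ![0,0,0,0]],
      ![![0,0,0,0], ![0,0,0,0], ![0,0,0,0], ![0,0,0,0]],
      ![![0,0,0,0], ![0,0,0,0], ![0,0,0,0], ![0,0,0,0]]],
    -- A_8(α) : e1e1=e3, e1e2=e4, e2e1=-α·e3, e2e2=-e4
    ![![![0,0,1,0], ![0,0,0,1], ![0,0,0,0], ![0,0,0,0]],
      ![![0,0,-α,0], ![0,0,0,-1], ![0,0,0,0], ![0,0,0,0]],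
      ![![0,0,0,0], ![0,0,0,0], ![0,0,0,0], ![0,0,0,0]],
      ![![0,0,0,0], ![0,0,0,0], ![0,0,0,0], ![0,0,0,0]]],
    -- A_9(α) : e1e1=e4, e1e2=α·e4, e2e1=-α·e4, e2e2=e4, e3e3=e4
    ![![![0,0,0,1], ![0,0,0,α], ![0,0,0,0], ![0,0,0,0]],
      ![![0,0,0,-α], ![0,0,0,1], ![0,0,0,0], ![0,0,0,0]],
      ![![0,0,0,0], ![0,0,0,0], ![0,0,0,1], ![0,0,0,0]],
      ![![0,0,0,0], ![0,0,0,0], ![0,0,0,0], ![0,0,0,0]]],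
    -- A_10 : e1e2=e4, e1e3=e4, e2e1=-e4, e2e2=e4, e3e1=e4
    ![![![0,0,0,0], ![0,0,0,1], ![0,0,0,1], ![0,0,0,0]],
      ![![0,0,0,-1], ![0,0,0,1], ![0,0,0,0], ![0,0,0,0]],
      ![![0,0,0,1], ![0,0,0,0], ![0,0,0,0], ![0,0,0,0]],
      ![![0,0,0,0], ![0,0,0,0], ![0,0,0,0], ![0,0,0,0]]],
    -- A_11 : e1e1=e4, e1e2=e4, e2e1=-e4, e3e3=e4
    ![![![0,0,0,1], ![0,0,0,1], ![0,0,0,0], ![0,0,0,0]],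
      ![![0,0,0,-1], ![0,0,0,0], ![0,0,0,0], ![0,0,0,0]],
      ![![0,0,0,0], ![0,0,0,0], ![0,0,0,1], ![0,0,0,0]],
      ![![0,0,0,0], ![0,0,0,0], ![0,0,0,0], ![0,0,0,0]]],
    -- A_12 : e1e2=e3, e2e1=e4
    ![![![0,0,0,0], ![0,0,1,0], ![0,0,0,0], ![0,0,0,0]],
      ![![0,0,0,1], ![0,0,0,0], ![0,0,0,0], ![0,0,0,0]],
      ![![0,0,0,0], ![0,0,0,0], ![0,0,0,0], ![0,0,0,0]],
      ![![0,0,0,0], ![0,0,0,0], ![0,0,0,0], ![0,0,0,0]]],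
    -- A_13 : e1e2=e3, e2e1=-e3, e2e2=e4
    ![![![0,0,0,0], ![0,0,1,0], ![0,0,0,0], ![0,0,0,0]],
      ![![0,0,-1,0], ![0,0,0,1], ![0,0,0,0], ![0,0,0,0]],
      ![![0,0,0,0], ![0,0,0,0], ![0,0,0,0], ![0,0,0,0]],
      ![![0,0,0,0], ![0,0,0,0], ![0,0,0,0], ![0,0,0,0]]],
    -- A_14 : e2e1=e4, e2e2=e3
    ![![![0,0,0,0], ![0,0,0,0], ![0,0,0,0], ![0,0,0,0]],
      ![![0,0,0,1], ![0,0,1,0], ![0,0,0,0], ![0,0,0,0]],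
      ![![0,0,0,0], ![0,0,0,0], ![0,0,0,0], ![0,0,0,0]],
      ![![0,0,0,0], ![0,0,0,0], ![0,0,0,0], ![0,0,0,0]]],
    -- A_15(α), α ≠ 1 : e1e2=e4, e2e2=e3, e2e1=((1+α)/(1-α))·e4
    ![![![0,0,0,0], ![0,0,0,1], ![0,0,0,0], ![0,0,0,0]],
      ![![0,0,0,(1+α)/(1-α)], ![0,0,1,0], ![0,0,0,0], ![0,0,0,0]],
      ![![0,0,0,0], ![0,0,0,0], ![0,0,0,0], ![0,0,0,0]],
      ![![0,0,0,0], ![0,0,0,0], ![0,0,0,0], ![0,0,0,0]]],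
    -- A_16 : e1e2=e4, e2e1=-e4, e3e3=e4
    ![![![0,0,0,0], ![0,0,0,1], ![0,0,0,0], ![0,0,0,0]],
      ![![0,0,0,-1], ![0,0,0,0], ![0,0,0,0], ![0,0,0,0]],
      ![![0,0,0,0], ![0,0,0,0], ![0,0,0,1], ![0,0,0,0]],
      ![![0,0,0,0], ![0,0,0,0], ![0,0,0,0], ![0,0,0,0]]]] idx

/-- The multiplication of the algebra `A_{k+1}` (with parameter `α`) on `Fin 4 → ℂ`. -/
noncomputable def dim4Alg (k : Fin 16) (α : ℂ) :
    (Fin 4 → ℂ) →ₗ[ℂ] (Fin 4 → ℂ) →ₗ[ℂ] (Fin 4 → ℂ) :=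
  mulOf 4 (dim4Table k α)

/-- A (Zinbiel) algebra is *split* if it is the direct sum of two nonzero ideals. -/
def IsSplit {A : Type*} [AddCommGroup A] [Module ℂ A]
    (mul : A →ₗ[ℂ] A →ₗ[ℂ] A) : Prop :=
  ∃ I J : Submodule ℂ A, I ≠ ⊥ ∧ J ≠ ⊥ ∧ I ⊓ J = ⊥ ∧ I ⊔ J = ⊤ ∧
    (∀ a : A, ∀ x ∈ I, mul a x ∈ I ∧ mul x a ∈ I) ∧
    (∀ a : A, ∀ x ∈ J, mul a x ∈ J ∧ mul x a ∈ J)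

def Gen4 {A : Type*} [AddCommGroup A] [Module ℂ A] (e1 e2 e3 e4 : A) : Prop :=
  ∀ S : Submodule ℂ A, e1 ∈ S → e2 ∈ S → e3 ∈ S → e4 ∈ S → S = ⊤

lemma Gen4.span {A : Type*} [AddCommGroup A] [Module ℂ A] {e1 e2 e3 e4 : A}
    (h : Gen4 e1 e2 e3 e4) : ⊤ ≤ Submodule.span ℂ (Set.range ![e1, e2, e3, e4]) := by
  rw [h (Submodule.span ℂ (Set.range ![e1, e2, e3, e4]))
    (Submodule.subset_span ⟨0, rfl⟩) (Submodule.subset_span ⟨1, rfl⟩)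
    (Submodule.subset_span ⟨2, rfl⟩) (Submodule.subset_span ⟨3, rfl⟩)]

lemma Gen4.li {A : Type*} [AddCommGroup A] [Module ℂ A] [FiniteDimensional ℂ A]
    (hdim : Module.finrank ℂ A = 4) {e1 e2 e3 e4 : A}
    (h : Gen4 e1 e2 e3 e4) : LinearIndependent ℂ ![e1, e2, e3, e4] :=
  linearIndependent_of_top_le_span_of_card_eq_finrank h.span (by simp [hdim])

lemma Gen4.ex {A : Type*} [AddCommGroup A] [Module ℂ A] {e1 e2 e3 e4 : A}
    (h : Gen4 e1 e2 e3 e4) (x : A) :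
    ∃ a b c d : ℂ, x = a • e1 + b • e2 + c • e3 + d • e4 := by
  have hx := h.span (Submodule.mem_top (x := x))
  rw [Submodule.mem_span_range_iff_exists_fun] at hx
  obtain ⟨c, rfl⟩ := hx
  exact ⟨c 0, c 1, c 2, c 3, by simp [Fin.sum_univ_four]⟩

lemma isom_of {A : Type*} [AddCommGroup A] [Module ℂ A] [FiniteDimensional ℂ A]
    (mul : A →ₗ[ℂ] A →ₗ[ℂ] A) (hdim : Module.finrank ℂ A = 4) {e1 e2 e3 e4 : A}
    (h : Gen4 e1 e2 e3 e4) (c : Fin 4 → Fin 4 → Fin 4 → ℂ)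
    (hc : ∀ i j, mul (![e1, e2, e3, e4] i) (![e1, e2, e3, e4] j)
      = ∑ k, c i j k • ![e1, e2, e3, e4] k) : Isom mul (mulOf 4 c) := by
  let B := basisOfTopLeSpanOfCardEqFinrank ![e1, e2, e3, e4] h.span (by simp [hdim])
  have hB : ∀ i, B i = ![e1, e2, e3, e4] i := fun i => by simp [B]
  refine ⟨B.equivFun, ?_⟩
  suffices hh : mul.compr₂ B.equivFun.toLinearMap
      = (mulOf 4 c).compl₁₂ B.equivFun.toLinearMap B.equivFun.toLinearMap by
    intro x y
    exact LinearMap.congr_fun (LinearMap.congr_fun hh x) y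
  refine B.ext fun i => B.ext fun j => ?_
  have h1 : mul (B i) (B j) = ∑ k, c i j k • B k := by simp only [hB]; exact hc i j
  simp only [LinearMap.compr₂_apply, LinearMap.compl₁₂_apply, LinearEquiv.coe_coe, h1]
  funext k
  simp [mulOf, Finsupp.single_apply, Pi.single_apply]

lemma split_of {A : Type*} [AddCommGroup A] [Module ℂ A] [FiniteDimensional ℂ A]
    (mul : A →ₗ[ℂ] A →ₗ[ℂ] A) (hdim : Module.finrank ℂ A = 4) {e1 e2 e3 e4 : A}
    (h : Gen4 e1 e2 e3 e4) (h11 : mul e1 e1 = e3) (h12 : mul e1 e2 = 0)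
    (h21 : mul e2 e1 = 0) (h22 : mul e2 e2 = 0) (h13 : mul e1 e3 = e4)
    (h31 : mul e3 e1 = (2:ℂ) • e4) (h23 : mul e2 e3 = 0) (h32 : mul e3 e2 = 0)
    (h33 : mul e3 e3 = 0) (hr : ∀ x, mul x e4 = 0) (hl : ∀ x, mul e4 x = 0) :
    IsSplit mul := by
  have li := h.li hdim
  have hne : e2 ≠ 0 := li.ne_zero 1
  have hne1 : e1 ≠ 0 := li.ne_zero 0
  refine ⟨Submodule.span ℂ {e2}, Submodule.span ℂ {e1, e3, e4}, ?_, ?_, ?_, ?_, ?_, ?_⟩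
  · simpa using hne
  · intro hb
    have : e1 ∈ Submodule.span ℂ {e1, e3, e4} := Submodule.subset_span (by simp)
    rw [hb] at this
    exact hne1 (by simpa using this)
  · have := li.disjoint_span_image (s := {1}) (t := {0, 2, 3}) (by simp)
    rw [disjoint_iff] at this
    simpa [Set.image_insert_eq] using this
  · apply h
    · exact Submodule.mem_sup_right (Submodule.subset_span (by simp))
    · exact Submodule.mem_sup_left (Submodule.subset_span (by simp))
    · exact Submodule.mem_sup_right (Submodule.subset_span (by simp))
    · exact Submodule.mem_sup_right (Submodule.subset_span (by simp))
  · intro a x hx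
    obtain ⟨t, rfl⟩ := Submodule.mem_span_singleton.1 hx
    obtain ⟨a1, a2, a3, a4, rfl⟩ := h.ex a
    simp [h12, h22, h32, hl, h21, h23, hr]
  · have key : ∀ a b, mul a b ∈ Submodule.span ℂ {e1, e3, e4} := by
      intro a b
      have m3 : e3 ∈ Submodule.span ℂ {e1, e3, e4} := Submodule.subset_span (by simp)
      have m4 : e4 ∈ Submodule.span ℂ {e1, e3, e4} := Submodule.subset_span (by simp)
      obtain ⟨a1, a2, a3, a4, rfl⟩ := h.ex a
      obtain ⟨b1, b2, b3, b4, rfl⟩ := h.ex b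
      simp only [map_add, map_smul, LinearMap.add_apply, LinearMap.smul_apply,
        h11, h12, h13, h21, h22, h23, h31, h32, h33, hr, hl, smul_zero, add_zero, zero_add]
      set S := Submodule.span ℂ {e1, e3, e4}
      repeat' first
        | exact m3
        | exact m4
        | exact S.zero_mem
        | apply S.smul_mem
        | apply S.add_mem
    intro a x _
    exact ⟨key _ _, key _ _⟩

lemma caseI {A : Type*} [AddCommGroup A] [Module ℂ A] [FiniteDimensional ℂ A]
    (mul : A →ₗ[ℂ] A →ₗ[ℂ] A) (hdim : Module.finrank ℂ A = 4) (hns : ¬ IsSplit mul)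
    {e1 e2 e3 e4 : A} (p q s : ℂ)
    (h : Gen4 e1 e2 e3 e4) (h11 : mul e1 e1 = e3) (h12 : mul e1 e2 = p • e4)
    (h21 : mul e2 e1 = q • e4) (h22 : mul e2 e2 = s • e4) (h13 : mul e1 e3 = e4)
    (h31 : mul e3 e1 = (2:ℂ) • e4) (h23 : mul e2 e3 = 0) (h32 : mul e3 e2 = 0)
    (h33 : mul e3 e3 = 0) (hr : ∀ x, mul x e4 = 0) (hl : ∀ x, mul e4 x = 0) :
    Isom mul (dim4Alg 1 0) ∨ Isom mul (dim4Alg 2 0) := by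
  by_cases hs : s = 0
  · subst hs
    by_cases hp : p = q / 2
    · subst hp
      refine absurd (split_of mul hdim (e1 := e1) (e2 := e2 - (q/2) • e3) (e3 := e3) (e4 := e4)
        ?_ h11 ?_ ?_ ?_ h13 h31 ?_ ?_ h33 hr hl) hns
      · intro S h1 h2 h3 h4
        apply h S h1 _ h3 h4
        simpa using S.add_mem h2 (S.smul_mem (q/2) h3)
      all_goals
        simp only [map_add, map_sub, map_smul, LinearMap.add_apply, LinearMap.sub_apply,
          LinearMap.smul_apply, h11, h12, h13, h21, h22, h23, h31, h32, h33, hr, hl]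
        module
    · left
      have hp' : p - q / 2 ≠ 0 := sub_ne_zero.2 hp
      set d := p - q / 2 with hd
      refine isom_of mul hdim (e1 := e1) (e2 := d⁻¹ • (e2 - (q/2) • e3)) (e3 := e3) (e4 := e4)
        ?_ _ ?_
      · intro S h1 h2 h3 h4
        apply h S h1 _ h3 h4
        have := S.smul_mem d h2
        rw [smul_inv_smul₀ hp'] at this
        simpa using S.add_mem this (S.smul_mem (q/2) h3)
      · have hpe : p = d + q / 2 := by rw [hd]; ring
        rw [hpe] at h12
        intro i j
        fin_cases i <;> fin_cases j <;>
        simp [dim4Table, Fin.sum_univ_four, h11, h12, h13, h21, h22, h23, h31, h32, h33, hr, hl, -smul_eq_zero, -inv_eq_zero]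
        all_goals
          match_scalars <;> field_simp <;> try ring
  · right
    obtain ⟨y, hy⟩ := IsAlgClosed.exists_pow_nat_eq s (n := 2) (by norm_num)
    have hy0 : y ≠ 0 := by rintro rfl; simp at hy; exact hs hy.symm
    subst hy
    refine isom_of mul hdim (e1 := e1 + ((q - 2 * p) / y ^ 2) • (e2 + (p - q) • e3))
      (e2 := y⁻¹ • (e2 + (p - q) • e3)) (e3 := e3 - ((q - 2 * p) ^ 2 / y ^ 2) • e4) (e4 := e4)
        ?_ _ ?_
    · intro S h1 h2 h3 h4
      have g3 : e3 ∈ S := by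
        have := S.add_mem h3 (S.smul_mem ((q - 2 * p) ^ 2 / y ^ 2) h4)
        rwa [sub_add_cancel] at this
      have g2' : e2 + (p - q) • e3 ∈ S := by
        have := S.smul_mem y h2
        rwa [smul_inv_smul₀ hy0] at this
      have g2 : e2 ∈ S := by simpa using S.sub_mem g2' (S.smul_mem (p - q) g3)
      have g1 : e1 ∈ S := by
        have := S.sub_mem h1 (S.smul_mem ((q - 2 * p) / y ^ 2) g2')
        rwa [add_sub_cancel_right] at this
      exact h S g1 g2 g3 h4
    · intro i j
      fin_cases i <;> fin_cases j <;>
      simp [dim4Table, Fin.sum_univ_four, h11, h12, h13, h21, h22, h23, h31, h32, h33, hr, hl]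
      all_goals
        match_scalars <;> field_simp <;> try ring

lemma caseII {A : Type*} [AddCommGroup A] [Module ℂ A] [FiniteDimensional ℂ A]
    (mul : A →ₗ[ℂ] A →ₗ[ℂ] A) (hdim : Module.finrank ℂ A = 4)
    {e1 e2 e3 e4 : A} (p q s : ℂ)
    (h : Gen4 e1 e2 e3 e4) (h11 : mul e1 e1 = p • e4) (h12 : mul e1 e2 = e3)
    (h21 : mul e2 e1 = -e3 + q • e4) (h22 : mul e2 e2 = s • e4) (h13 : mul e1 e3 = e4)
    (h31 : mul e3 e1 = 0) (h23 : mul e2 e3 = 0) (h32 : mul e3 e2 = 0)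
    (h33 : mul e3 e3 = 0) (hr : ∀ x, mul x e4 = 0) (hl : ∀ x, mul e4 x = 0) :
    Isom mul (dim4Alg 3 0) ∨ Isom mul (dim4Alg 4 0) := by
  by_cases hs : s = 0
  · subst hs
    left
    refine isom_of mul hdim (e1 := e1 - p • e3) (e2 := e2 - q • e3) (e3 := e3 - q • e4) (e4 := e4)
        ?_ _ ?_
    · intro S h1 h2 h3 h4
      have g3 : e3 ∈ S := by simpa using S.add_mem h3 (S.smul_mem q h4)
      have g2 : e2 ∈ S := by simpa using S.add_mem h2 (S.smul_mem q g3)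
      have g1 : e1 ∈ S := by simpa using S.add_mem h1 (S.smul_mem p g3)
      exact h S g1 g2 g3 h4
    · intro i j
      fin_cases i <;> fin_cases j <;>
      simp [dim4Table, Fin.sum_univ_four, h11, h12, h13, h21, h22, h23, h31, h32, h33, hr, hl]
      abel
  · right
    refine isom_of mul hdim (e1 := e1 - p • e3) (e2 := s⁻¹ • (e2 - q • e3))
      (e3 := s⁻¹ • (e3 - q • e4)) (e4 := s⁻¹ • e4) ?_ _ ?_
    · intro S h1 h2 h3 h4
      have g4 : e4 ∈ S := by
        have := S.smul_mem s h4
        rwa [smul_inv_smul₀ hs] at this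
      have g3 : e3 ∈ S := by
        have := S.smul_mem s h3
        rw [smul_inv_smul₀ hs] at this
        simpa using S.add_mem this (S.smul_mem q g4)
      have g2 : e2 ∈ S := by
        have := S.smul_mem s h2
        rw [smul_inv_smul₀ hs] at this
        simpa using S.add_mem this (S.smul_mem q g3)
      have g1 : e1 ∈ S := by simpa using S.add_mem h1 (S.smul_mem p g3)
      exact h S g1 g2 g3 g4
    · intro i j
      fin_cases i <;> fin_cases j <;>
      simp [dim4Table, Fin.sum_univ_four, h11, h12, h13, h21, h22, h23, h31, h32, h33, hr, hl]
      all_goals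
        match_scalars <;> field_simp <;> try ring

lemma coef {A : Type*} [AddCommGroup A] [Module ℂ A] {v : A} (hv : v ≠ 0) {a b : ℂ}
    (h : a • v = b • v) : a = b := smul_left_injective ℂ hv h

theorem main_setup (A : Type*) [AddCommGroup A] [Module ℂ A]
    [FiniteDimensional ℂ A]
    (mul : A →ₗ[ℂ] A →ₗ[ℂ] A) (hzin : IsZinbiel mul)
    (hdim : Module.finrank ℂ A = 4)
    (h2 : Module.finrank ℂ (zpow mul 2) = 2)
    (h3 : Module.finrank ℂ (zpow mul 3) = 1)
    (h4 : Module.finrank ℂ (zpow mul 4) = 0) :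
    ∃ e1 e2 e3 e4 : A, Gen4 e1 e2 e3 e4 ∧ mul e1 e3 = e4 ∧ mul e2 e3 = 0 ∧ mul e3 e3 = 0 ∧
      (∀ x, mul x e4 = 0) ∧ (∀ x, mul e4 x = 0) ∧ (∀ x, ∃ r : ℂ, mul e3 x = r • e4) ∧
      (∀ x y, ∃ b c : ℂ, mul x y = b • e3 + c • e4) ∧
      ¬ (∀ x y, ∃ c : ℂ, mul x y = c • e4) := by
  have m2 : ∀ a b, mul a b ∈ zpow mul 2 := fun a b =>
    Submodule.subset_span ⟨a, b, Submodule.mem_top, rfl⟩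
  have m3 : ∀ a, ∀ b ∈ zpow mul 2, mul a b ∈ zpow mul 3 := fun a b hb =>
    Submodule.subset_span ⟨a, b, hb, rfl⟩
  have m4 : ∀ a, ∀ b ∈ zpow mul 3, mul a b = 0 := fun a b hb => by
    have : mul a b ∈ zpow mul 4 := Submodule.subset_span ⟨a, b, hb, rfl⟩
    rw [Submodule.finrank_eq_zero.1 h4] at this
    simpa using this
  have m2l : ∀ x ∈ zpow mul 2, ∀ c, mul x c ∈ zpow mul 3 := by
    intro x hx c
    induction hx using Submodule.span_induction with
    | mem x hx =>
      obtain ⟨a, b, -, rfl⟩ := hx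
      rw [hzin]
      exact add_mem (m3 _ _ (m2 _ _)) (m3 _ _ (m2 _ _))
    | zero => simp
    | add x y _ _ hx hy => rw [map_add]; exact add_mem hx hy
    | smul t x _ hx => rw [map_smul]; exact Submodule.smul_mem _ t hx
  have m22 : ∀ x ∈ zpow mul 2, ∀ c ∈ zpow mul 2, mul x c = 0 := by
    intro x hx c hc
    induction hx using Submodule.span_induction with
    | mem x hx =>
      obtain ⟨a, b, -, rfl⟩ := hx
      rw [hzin, m4 _ _ (m3 _ _ hc), m4 _ _ (m2l _ hc _), add_zero]
    | zero => simp
    | add x y _ _ hx hy => rw [map_add, LinearMap.add_apply, hx, hy, add_zero]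
    | smul t x _ hx => rw [map_smul, LinearMap.smul_apply, hx, smul_zero]
  have m3l : ∀ x ∈ zpow mul 3, ∀ c, mul x c = 0 := by
    intro x hx c
    induction hx using Submodule.span_induction with
    | mem x hx =>
      obtain ⟨a, b, hb, rfl⟩ := hx
      rw [hzin, m4 _ _ (m3 _ _ hb), m4 _ _ (m2l _ hb _), add_zero]
    | zero => simp
    | add x y _ _ hx hy => rw [map_add, LinearMap.add_apply, hx, hy, add_zero]
    | smul t x _ hx => rw [map_smul, LinearMap.smul_apply, hx, smul_zero]
  have h32 : zpow mul 3 ≤ zpow mul 2 := by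
    refine Submodule.span_le.2 ?_
    rintro _ ⟨a, b, _, rfl⟩
    exact m2 a b
  have hn : ¬ zpow mul 2 ≤ zpow mul 3 := fun hle => by
    have := Submodule.finrank_mono hle
    omega
  obtain ⟨e3, he3, he3'⟩ := SetLike.not_le_iff_exists.1 hn
  have k3 : ∀ v ∈ zpow mul 3, v ≠ 0 → ∀ x ∈ zpow mul 3, ∃ c : ℂ, x = c • v := by
    intro v hv hv0 x hx
    have := (finrank_eq_one_iff_of_nonzero' (⟨v, hv⟩ : zpow mul 3) (by simpa using hv0)).1 h3
      ⟨x, hx⟩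
    obtain ⟨c, hc⟩ := this
    exact ⟨c, by simpa using (congrArg Subtype.val hc).symm⟩
  have k2 : ∀ v ∈ zpow mul 3, v ≠ 0 → ∀ x ∈ zpow mul 2, ∃ b c : ℂ, x = b • e3 + c • v := by
    intro v hv hv0 x hx
    have li : LinearIndependent ℂ ![e3, v] := by
      rw [LinearIndependent.pair_iff]
      intro s t hst
      have hs : s = 0 := by
        by_contra hs
        apply he3'
        have h5 : s • e3 ∈ zpow mul 3 := by
          rw [eq_neg_of_add_eq_zero_left hst]
          exact neg_mem (Submodule.smul_mem _ _ hv)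
        exact ((zpow mul 3).smul_mem_iff hs).1 h5
      subst hs
      simp [hv0] at hst
      exact ⟨rfl, hst⟩
    have hsp : Submodule.span ℂ (Set.range ![e3, v]) = zpow mul 2 := by
      apply Submodule.eq_of_le_of_finrank_eq
      · rw [Submodule.span_le]
        rintro _ ⟨i, rfl⟩
        fin_cases i
        · exact he3
        · exact h32 hv
      · rw [finrank_span_eq_card li, h2]; simp
    rw [← hsp, Submodule.mem_span_range_iff_exists_fun] at hx
    obtain ⟨c, rfl⟩ := hx
    exact ⟨c 0, c 1, by simp⟩
  obtain ⟨e1, he1⟩ : ∃ a, mul a e3 ≠ 0 := by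
    by_contra! hcon
    obtain ⟨⟨v, hv⟩, hv0, -⟩ := finrank_eq_one_iff'.1 h3
    have hv0' : v ≠ 0 := by simpa using hv0
    apply hv0'
    have : zpow mul 3 ≤ ⊥ := by
      refine Submodule.span_le.2 ?_
      rintro _ ⟨a, b, hb, rfl⟩
      obtain ⟨s, t, rfl⟩ := k2 v hv hv0' b hb
      simp [hcon, m4 _ _ hv]
    simpa using this hv
  have he4 : mul e1 e3 ∈ zpow mul 3 := m3 _ _ he3
  have hker : ¬ LinearMap.ker (mul.flip e3) ≤ zpow mul 2 := fun hle => by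
    have a1 := Submodule.finrank_mono hle
    have a2 := LinearMap.finrank_range_add_finrank_ker (mul.flip e3)
    have a3 : LinearMap.range (mul.flip e3) ≤ zpow mul 3 := by
      rintro _ ⟨x, rfl⟩
      exact m3 _ _ he3
    have a4 := Submodule.finrank_mono a3
    omega
  obtain ⟨e2, he2, he2'⟩ := SetLike.not_le_iff_exists.1 hker
  have he2z : mul e2 e3 = 0 := by simpa using he2
  have e33 := m22 _ he3 _ he3
  refine ⟨e1, e2, e3, mul e1 e3, ?_, rfl, he2z, e33, fun x => m4 _ _ he4,
    m3l _ he4, fun x => k3 _ he4 he1 _ (m2l _ he3 _), fun x y => k2 _ he4 he1 _ (m2 x y), ?_⟩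
  · have li : LinearIndependent ℂ ![e1, e2, e3, mul e1 e3] := by
      rw [Fintype.linearIndependent_iff]
      intro g hg
      simp only [Fin.sum_univ_four] at hg
      change g 0 • e1 + g 1 • e2 + g 2 • e3 + g 3 • mul e1 e3 = 0 at hg
      have g0 : g 0 = 0 := by
        have := congrArg (fun x => mul x e3) hg
        simpa [he2z, e33, m3l _ he4, he1] using this
      rw [g0, zero_smul, zero_add] at hg
      have g1 : g 1 = 0 := by
        by_contra hs
        apply he2'
        refine ((zpow mul 2).smul_mem_iff hs).1 ?_
        rw [add_assoc] at hg
        rw [eq_neg_of_add_eq_zero_left hg]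
        exact neg_mem (add_mem (Submodule.smul_mem _ _ he3) (Submodule.smul_mem _ _ (h32 he4)))
      rw [g1, zero_smul, zero_add] at hg
      have g2 : g 2 = 0 := by
        by_contra hs
        apply he3'
        refine ((zpow mul 3).smul_mem_iff hs).1 ?_
        rw [eq_neg_of_add_eq_zero_left hg]
        exact neg_mem (Submodule.smul_mem _ _ he4)
      rw [g2, zero_smul, zero_add] at hg
      have g3 : g 3 = 0 := by simpa [he1] using hg
      intro i
      fin_cases i <;> assumption
    have hsp := li.span_eq_top_of_card_eq_finrank (by simp [hdim])
    intro S s1 s2 s3 s4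
    rw [eq_top_iff, ← hsp, Submodule.span_le]
    rintro _ ⟨i, rfl⟩
    fin_cases i <;> assumption
  · intro hcon
    apply hn
    refine Submodule.span_le.2 ?_
    rintro _ ⟨a, b, _, rfl⟩
    obtain ⟨c, hc⟩ := hcon a b
    rw [hc]
    exact Submodule.smul_mem _ _ he4

theorem dim4_filiform_classification (A : Type*) [AddCommGroup A] [Module ℂ A]
    [FiniteDimensional ℂ A]
    (mul : A →ₗ[ℂ] A →ₗ[ℂ] A) (hzin : IsZinbiel mul)
    (hdim : Module.finrank ℂ A = 4) (hns : ¬ IsSplit mul)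
    (h2 : Module.finrank ℂ (zpow mul 2) = 2)
    (h3 : Module.finrank ℂ (zpow mul 3) = 1)
    (h4 : Module.finrank ℂ (zpow mul 4) = 0) :
    Isom mul (dim4Alg 1 0) ∨ Isom mul (dim4Alg 2 0) ∨
      Isom mul (dim4Alg 3 0) ∨ Isom mul (dim4Alg 4 0) := by
  obtain ⟨e1, e2, e3, e4, hG, h13, h23, h33, hr, hl, hr3, hmul, hnot⟩ :=
    main_setup A mul hzin hdim h2 h3 h4
  have e4ne : e4 ≠ 0 := (hG.li hdim).ne_zero 3
  obtain ⟨r1, h31⟩ := hr3 e1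
  obtain ⟨r2, h32⟩ := hr3 e2
  obtain ⟨b11, c11, h11⟩ := hmul e1 e1
  obtain ⟨b12, c12, h12⟩ := hmul e1 e2
  obtain ⟨b21, c21, h21⟩ := hmul e2 e1
  obtain ⟨b22, c22, h22⟩ := hmul e2 e2
  have hnb : ¬ (b11 = 0 ∧ b12 = 0 ∧ b21 = 0 ∧ b22 = 0) := by
    rintro ⟨rfl, rfl, rfl, rfl⟩
    apply hnot
    intro x y
    obtain ⟨a1, a2, a3, a4, rfl⟩ := hG.ex x
    obtain ⟨d1, d2, d3, d4, rfl⟩ := hG.ex y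
    simp only [map_add, map_smul, LinearMap.add_apply, LinearMap.smul_apply,
        h11, h12, h13, h21, h22, h23, h31, h32, h33, hr, hl]
    refine ⟨d1 * (a1 * c11 + a2 * c21 + a3 * r1) + d2 * (a1 * c12 + a2 * c22 + a3 * r2)
      + d3 * a1, ?_⟩
    module
  have z := fun x y z => hzin x y z
  have z111 : b11 * r1 = b11 + b11 := coef e4ne (by
    have := z e1 e1 e1; simpa [h11, h12, h21, h22, h13, h23, h31, h32, hr, hl, mul_smul, add_smul] using this)
  have z112 : b11 * r2 = b12 + b21 := coef e4ne (by
    have := z e1 e1 e2; simpa [h11, h12, h21, h22, h13, h23, h31, h32, hr, hl, mul_smul, add_smul] using this)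
  have z121 : b12 * r1 = b21 + b12 := coef e4ne (by
    have := z e1 e2 e1; simpa [h11, h12, h21, h22, h13, h23, h31, h32, hr, hl, mul_smul, add_smul] using this)
  have z122 : b12 * r2 = b22 + b22 := coef e4ne (by
    have := z e1 e2 e2; simpa [h11, h12, h21, h22, h13, h23, h31, h32, hr, hl, mul_smul, add_smul] using this)
  have z211 : b21 * r1 = 0 := coef e4ne (by
    have := z e2 e1 e1; simpa [h11, h12, h21, h22, h13, h23, h31, h32, hr, hl, mul_smul, add_smul] using this)
  have z212 : b21 * r2 = 0 := coef e4ne (by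
    have := z e2 e1 e2; simpa [h11, h12, h21, h22, h13, h23, h31, h32, hr, hl, mul_smul, add_smul] using this)
  have z221 : b22 * r1 = 0 := coef e4ne (by
    have := z e2 e2 e1; simpa [h11, h12, h21, h22, h13, h23, h31, h32, hr, hl, mul_smul, add_smul] using this)
  have z222 : b22 * r2 = 0 := coef e4ne (by
    have := z e2 e2 e2; simpa [h11, h12, h21, h22, h13, h23, h31, h32, hr, hl, mul_smul, add_smul] using this)
  by_cases hrz : r1 = 0 ∧ r2 = 0
  · obtain ⟨rfl, rfl⟩ := hrz
    have q11 : b11 = 0 := by grind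
    have q22 : b22 = 0 := by grind
    have q21 : b21 = -b12 := by grind
    have q12 : b12 ≠ 0 := by grind
    subst q11 q22 q21
    right; right
    refine caseII mul hdim (e1 := e1) (e2 := e2) (e3 := mul e1 e2) (e4 := b12 • e4)
      (c11 / b12) ((c12 + c21) / b12) (c22 / b12) ?_ ?_ ?_ ?_ ?_ ?_ ?_ ?_ ?_ ?_ ?_ ?_
    · intro S s1 s2 s3 s4
      have t4 := (S.smul_mem_iff q12).1 s4
      rw [h12] at s3
      have t3 := (S.add_mem_iff_left (S.smul_mem c12 t4)).1 s3
      exact hG S s1 s2 ((S.smul_mem_iff q12).1 t3) t4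
    all_goals
      simp [h11, h12, h13, h21, h22, h23, h31, h32, h33, hr, hl, -smul_eq_zero]
    all_goals
      try (match_scalars <;> field_simp <;> try ring)
  · have q21 : b21 = 0 := by grind
    have q22 : b22 = 0 := by grind
    have q12 : b12 = 0 := by grind
    have q11 : b11 ≠ 0 := by grind
    have qr1 : r1 = 2 := by grind
    have qr2 : r2 = 0 := by grind
    subst q12 q22 q21 qr1 qr2
    rw [← or_assoc]
    left
    refine caseI mul hdim hns (e1 := e1) (e2 := e2) (e3 := mul e1 e1) (e4 := b11 • e4)
      (c12 / b11) (c21 / b11) (c22 / b11) ?_ ?_ ?_ ?_ ?_ ?_ ?_ ?_ ?_ ?_ ?_ ?_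
    · intro S s1 s2 s3 s4
      have t4 := (S.smul_mem_iff q11).1 s4
      rw [h11] at s3
      have t3 := (S.add_mem_iff_left (S.smul_mem c11 t4)).1 s3
      exact hG S s1 s2 ((S.smul_mem_iff q11).1 t3) t4
    all_goals
      simp [h11, h12, h13, h21, h22, h23, h31, h32, h33, hr, hl, -smul_eq_zero]
    all_goals
      try (match_scalars <;> field_simp <;> try ring)
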